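/- arXiv:2507.17945 — 2 statements merged into one kernel-verified Lean document; each statement's English description precedes it below -/
import Mathlib

section
/- For every real number t, the integral over x from 0 to ∞ of cos(2πtx) · sin(πx²) / cosh(πx) equals (−1 + √2 · cos(πt²)) / (2√2 · cosh(πt)). -/
/-!
The integral is the imaginary part of the Mordell integral
`M = ∫₀^∞ exp (iπ x²) cos (2π t x) / cosh (π x) dx`, which is evaluated by a contour shift by `i`.

The function `h z = (exp (iπ z²) cosh (π t (1 + 2iz)) - exp (-iπ / 4)) / cosh (π z)`
(`mordellQuot`) is holomorphic on the strip `0 ≤ Im z ≤ 1`, since the constant is chosen to cancel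
the only pole `i / 2`, and decays exponentially to the right. Cauchy's theorem (`strip_shift`)
therefore gives `∫₀^∞ (h x - h (x + i)) dx = i ∫₀¹ h (i y) dy`. The quasi-periodicity of `exp (iπ z²)`
and `cosh (π z)` turns the left side into `2 cosh (π t) M`, minus a multiple of the
elementary integral of `1 / cosh (π x)`, minus a Fresnel integral on the half-line at height `1 / 2` (`pointwise_id`).
On the right side, the symmetry `y ↦ 1 - y` removes the denominator and leaves a Fresnel integral
over the segment from `0` to `i / 2` (`vertical_integral`). The two Fresnel integrals join into one
along a path from `0` to `i / 2 + ∞`, which is the limit of a Gaussian Fourier integral on the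
half-line (`fresnel_shift`). Altogether
`2 cosh (π t) M = i exp (-iπ t²) + exp (-iπ / 4)` (`mordell_eval`).
-/

open Real MeasureTheory Set

/-! ### Shifting a half-line in a strip -/

open Filter Topology Complex in
/-- Cauchy's theorem on a half-strip `0 ≤ Re z`, `0 ≤ Im z ≤ c`, for a function that decays
exponentially as `Re z → ∞`: moving the half-line up by `c` costs only the integral over the
left edge. -/
theorem strip_shift {f : ℂ → ℂ} {c K a : ℝ} (hc : 0 ≤ c) (ha : 0 < a)
    (hd : ∀ z : ℂ, 0 ≤ z.im → z.im ≤ c → DifferentiableAt ℂ f z)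
    (hb : ∀ z : ℂ, 1 ≤ z.re → 0 ≤ z.im → z.im ≤ c → ‖f z‖ ≤ K * Real.exp (-a * z.re)) :
    IntegrableOn (fun x : ℝ => f x) (Ioi 0) ∧
    IntegrableOn (fun x : ℝ => f (x + c * I)) (Ioi 0) ∧
    (∫ x in Ioi (0 : ℝ), f x) - (∫ x in Ioi (0 : ℝ), f (x + c * I))
      = I * ∫ y in (0 : ℝ)..c, f (y * I) := by
  have key : ∀ s : ℝ, 0 ≤ s → s ≤ c → IntegrableOn (fun x : ℝ => f (x + s * I)) (Ioi 0) := by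
    intro s hs0 hs1
    have hcont : Continuous (fun x : ℝ => f (x + s * I)) := by
      rw [continuous_iff_continuousAt]
      intro x
      have h1 : ContinuousAt f (x + s * I) :=
        (hd _ (by simpa using hs0) (by simpa using hs1)).continuousAt
      exact ContinuousAt.comp (f := fun x : ℝ => (x + s * I : ℂ)) h1 (by fun_prop)
    have h2 : IntegrableOn (fun x : ℝ => ‖f (x + s * I)‖) (Ioi 0) := by
      refine integrable_of_isBigO_exp_neg ha hcont.norm.continuousOn ?_
      refine Asymptotics.IsBigO.of_bound K ?_
      filter_upwards [eventually_ge_atTop 1] with x hx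
      have := hb (x + s * I) (by simpa using hx) (by simpa using hs0) (by simpa using hs1)
      simpa [abs_of_pos (Real.exp_pos _)] using this
    exact (integrable_norm_iff hcont.aestronglyMeasurable).1 h2
  have k0 : IntegrableOn (fun x : ℝ => f x) (Ioi 0) := by simpa using key 0 le_rfl hc
  have kc := key c hc le_rfl
  refine ⟨k0, kc, ?_⟩
  have t0 := intervalIntegral_tendsto_integral_Ioi 0 k0 tendsto_id
  have tc := intervalIntegral_tendsto_integral_Ioi 0 kc tendsto_id
  -- The right edge contributes nothing in the limit.
  have tv : Tendsto (fun R : ℝ => I * ∫ y in (0 : ℝ)..c, f (R + y * I)) atTop (𝓝 0) := by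
    have hz : Tendsto (fun R : ℝ => K * Real.exp (-a * R) * c) atTop (𝓝 0) := by
      have : Tendsto (fun R : ℝ => Real.exp (-a * R)) atTop (𝓝 0) := by
        refine Real.tendsto_exp_atBot.comp ?_
        exact tendsto_id.const_mul_atTop_of_neg (by linarith)
      simpa using (this.const_mul K).mul_const c
    refine squeeze_zero_norm' ?_ hz
    filter_upwards [eventually_ge_atTop 1] with R hR
    rw [norm_mul, norm_I, one_mul]
    refine (intervalIntegral.norm_integral_le_of_norm_le_const (C := K * Real.exp (-a * R)) ?_).trans
      (by rw [sub_zero, abs_of_nonneg hc])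
    intro y hy
    rw [uIoc_of_le hc] at hy
    simpa using hb (R + y * I) (by simpa using hR) (by simpa using hy.1.le) (by simpa using hy.2)
  have hrect : ∀ R : ℝ, (∫ x in (0 : ℝ)..R, f x) - (∫ x in (0 : ℝ)..R, f (x + c * I))
      + (I * ∫ y in (0 : ℝ)..c, f (R + y * I)) = I * ∫ y in (0 : ℝ)..c, f (y * I) := by
    intro R
    have := Complex.integral_boundary_rect_eq_zero_of_differentiableOn f 0 (R + c * I) (by
      intro z hz
      have h2 := hz.2
      simp only [mem_preimage, zero_im, add_im, ofReal_im, mul_im, ofReal_re, I_im, mul_one, I_re,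
        mul_zero, add_zero, zero_add, uIcc_of_le hc] at h2
      exact (hd z h2.1 h2.2).differentiableWithinAt)
    simp only [zero_re, zero_im, add_re, add_im, ofReal_re, ofReal_im, mul_re, mul_im, I_re, I_im,
      mul_zero, mul_one, zero_add, add_zero, sub_zero, ofReal_zero, zero_mul, smul_eq_mul] at this
    linear_combination this
  have hlim := (t0.sub tc).add tv
  rw [add_zero] at hlim
  refine tendsto_nhds_unique hlim ?_
  refine tendsto_const_nhds.congr ?_
  intro R
  exact (hrect R).symm

/-! ### Hyperbolic estimates and the integral of `1 / cosh` -/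

theorem norm_ccosh_le (w : ℂ) : ‖Complex.cosh w‖ ≤ Real.cosh w.re := by
  rw [Complex.cosh, Real.cosh_eq, norm_div, Complex.norm_ofNat]
  gcongr
  refine (norm_add_le _ _).trans ?_
  rw [Complex.norm_exp, Complex.norm_exp, Complex.neg_re]

theorem sinh_le_norm_ccosh (w : ℂ) : Real.sinh w.re ≤ ‖Complex.cosh w‖ := by
  rw [Complex.cosh, Real.sinh_eq, norm_div, Complex.norm_ofNat]
  gcongr
  have := norm_sub_norm_le (Complex.exp w) (-Complex.exp (-w))
  rw [norm_neg, sub_neg_eq_add, Complex.norm_exp, Complex.norm_exp, Complex.neg_re] at this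
  exact this

theorem norm_ccos_le (w : ℂ) : ‖Complex.cos w‖ ≤ Real.cosh w.im := by
  rw [← Complex.cosh_mul_I]
  refine (norm_ccosh_le _).trans_eq ?_
  simp [Real.cosh_neg]

open Complex in
theorem integral_inv_cosh :
    IntegrableOn (fun x : ℝ => 1 / Real.cosh (π * x)) (Ioi 0) ∧
    ∫ x in Ioi (0 : ℝ), 1 / Real.cosh (π * x) = 1 / 2 := by
  have hderiv : ∀ x ∈ Ici (0 : ℝ), HasDerivAt (fun x : ℝ => 1 / π * Real.arctan (Real.sinh (π * x)))
      (1 / Real.cosh (π * x)) x := by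
    intro x _
    have h1 : HasDerivAt (fun x : ℝ => π * x) π x := by
      simpa using (hasDerivAt_id x).const_mul π
    have h2 := (h1.sinh.arctan).const_mul (1 / π)
    refine h2.congr_deriv ?_
    have hc : Real.cosh (π * x) ≠ 0 := (Real.cosh_pos _).ne'
    have : 1 + Real.sinh (π * x) ^ 2 = Real.cosh (π * x) ^ 2 := by
      rw [Real.cosh_sq]; ring
    rw [this]
    have := Real.pi_ne_zero
    field_simp
  have hlim : Filter.Tendsto (fun x : ℝ => 1 / π * Real.arctan (Real.sinh (π * x))) Filter.atTop
      (nhds (1 / 2)) := by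
    have hs : Filter.Tendsto Real.sinh Filter.atTop Filter.atTop :=
      Real.sinh_strictMono.monotone.tendsto_atTop_atTop fun b =>
        ⟨Real.arsinh b, (Real.sinh_arsinh b).ge⟩
    have h1 : Filter.Tendsto (fun x : ℝ => π * x) Filter.atTop Filter.atTop :=
      Filter.tendsto_id.const_mul_atTop Real.pi_pos
    have h2 := (tendsto_nhds_of_tendsto_nhdsWithin Real.tendsto_arctan_atTop).comp (hs.comp h1)
    have h3 := h2.const_mul (1 / π)
    have h4 : 1 / π * (π / 2) = 1 / 2 := by
      have := Real.pi_ne_zero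
      field_simp
    rw [h4] at h3
    exact h3
  have hpos : ∀ x ∈ Ioi (0 : ℝ), 0 ≤ 1 / Real.cosh (π * x) := fun x _ =>
    (one_div_pos.2 (Real.cosh_pos _)).le
  refine ⟨integrableOn_Ioi_deriv_of_nonneg' hderiv hpos hlim, ?_⟩
  rw [integral_Ioi_of_hasDerivAt_of_nonneg' hderiv hpos hlim]
  simp

/-! ### Gaussian and Fresnel integrals -/

/-- The entire function `exp (-π b z²) cos (2π t z)`. For `Re b > 0` it is a Gaussian on the
real line; at `b = -i` it is the Fresnel kernel `exp (iπ z²) cos (2π t z)`. -/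
noncomputable def gaussCos (b : ℂ) (t : ℝ) (z : ℂ) : ℂ :=
  Complex.exp (-π * b * z ^ 2) * Complex.cos (2 * π * t * z)

open Complex in
theorem norm_gaussCos_le (δ t : ℝ) (z : ℂ) :
    ‖gaussCos (δ - I) t z‖ ≤ Real.exp (-π * δ * (z.re ^ 2 - z.im ^ 2) - 2 * π * z.re * z.im)
      * Real.cosh (2 * π * t * z.im) := by
  rw [gaussCos, norm_mul, Complex.norm_exp]
  have h1 : (-π * (δ - I) * z ^ 2 : ℂ).re
      = -π * δ * (z.re ^ 2 - z.im ^ 2) - 2 * π * z.re * z.im := by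
    simp [pow_two]; ring
  have h2 : (2 * π * t * z : ℂ).im = 2 * π * t * z.im := by
    simp [mul_assoc]
  rw [h1, ← h2]
  gcongr
  exact norm_ccos_le _

open Complex in
/-- Half of the Fourier transform of a Gaussian: the integrand is even. -/
theorem half_gauss {b : ℂ} (hb : 0 < b.re) (t : ℝ) :
    ∫ x in Ioi (0 : ℝ), gaussCos b t x = 1 / 2 * ((1 / b) ^ (1 / 2 : ℂ) * cexp (-π * t ^ 2 / b)) := by
  have hpb : 0 < (π * b : ℂ).re := by simpa using mul_pos Real.pi_pos hb
  have hi : ∀ s : ℂ, Integrable (fun x : ℝ => cexp (I * s * x) * cexp (-(π * b) * x ^ 2)) := by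
    intro s
    have := integrable_cexp_quadratic hpb (I * s) 0
    refine this.congr (Filter.Eventually.of_forall fun x => ?_)
    simp only [← Complex.exp_add]
    congr 1; ring
  have hG : (fun x : ℝ => gaussCos b t x) = fun x : ℝ =>
      (1 / 2 : ℂ) * (cexp (I * (2 * π * t) * x) * cexp (-(π * b) * x ^ 2)
        + cexp (I * (-(2 * π * t)) * x) * cexp (-(π * b) * x ^ 2)) := by
    funext x
    rw [gaussCos, Complex.cos]
    ring_nf
  have hint : Integrable (fun x : ℝ => gaussCos b t x) := by
    rw [hG]; exact ((hi _).add (hi _)).const_mul _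
  have hfull : ∫ x : ℝ, gaussCos b t x = (1 / b) ^ (1 / 2 : ℂ) * cexp (-π * t ^ 2 / b) := by
    have hb0 : b ≠ 0 := by rintro rfl; simp at hb
    have hpi : (π : ℂ) ≠ 0 := by exact_mod_cast Real.pi_ne_zero
    rw [hG, integral_const_mul, integral_add (hi _) (hi _), fourierIntegral_gaussian hpb,
      fourierIntegral_gaussian hpb]
    have e1 : (π / (π * b) : ℂ) = 1 / b := by field_simp
    have e2 : (-(2 * π * t) ^ 2 / (4 * (π * b)) : ℂ) = -π * t ^ 2 / b := by field_simp; ring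
    rw [neg_sq, e1, e2]; ring
  have hsplit := integral_add_compl (s := Iic (0 : ℝ)) measurableSet_Iic hint
  have hneg : ∫ x in Iic (0 : ℝ), gaussCos b t x = ∫ x in Ioi (0 : ℝ), gaussCos b t x := by
    have := integral_comp_neg_Iic 0 (fun x : ℝ => gaussCos b t x)
    rw [neg_zero] at this
    rw [← this]
    congr 1; funext x
    simp [gaussCos]
  rw [compl_Iic, hneg, hfull] at hsplit
  rw [← hsplit]; ring

theorem differentiable_gaussCos (b : ℂ) (t : ℝ) : Differentiable ℂ (gaussCos b t) := by
  unfold gaussCos; fun_prop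

open Complex in
/-- The half-line integral of a Gaussian, moved up to height `1 / 2`. The parameter `δ > 0`
provides the decay in `Re z` on the bottom edge that is missing at `δ = 0`. -/
theorem gauss_shift {δ : ℝ} (hδ : 0 < δ) (t : ℝ) :
    1 / 2 * ((1 / (δ - I : ℂ)) ^ (1 / 2 : ℂ) * cexp (-π * t ^ 2 / (δ - I)))
      - (∫ x in Ioi (0 : ℝ), gaussCos (δ - I) t (x + (1 / 2 : ℝ) * I))
      = I * ∫ y in (0 : ℝ)..(1 / 2), gaussCos (δ - I) t (y * I) := by
  have hb : 0 < (δ - I : ℂ).re := by simpa using hδ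
  rw [← half_gauss hb t]
  refine (strip_shift (c := 1 / 2) (K := Real.exp (π * δ / 4) * Real.cosh (π * t)) (a := π * δ) (by norm_num)
    (by positivity) (fun z _ _ => (differentiable_gaussCos _ t) z) ?_).2.2
  intro z hz h0 h1
  refine (norm_gaussCos_le δ t z).trans ?_
  rw [mul_right_comm (Real.exp (π * δ / 4)), ← Real.exp_add]
  have hpi := Real.pi_pos
  have hpd : 0 < π * δ := by positivity
  gcongr ?_ * ?_
  · apply Real.exp_le_exp.2
    have a1 : 0 ≤ π * z.re * z.im := by positivity
    have a2 : π * δ * (z.re) ≤ π * δ * z.re ^ 2 := by gcongr; nlinarith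
    have a3 : π * δ * z.im ^ 2 ≤ π * δ * (1 / 4) := by gcongr; nlinarith
    nlinarith
  · apply Real.cosh_le_cosh.2
    rw [show 2 * π * t * z.im = π * t * (2 * z.im) by ring, abs_mul]
    apply mul_le_of_le_one_right (abs_nonneg _)
    rw [abs_le]; constructor <;> linarith

open Complex Filter Topology in
/-- The limit `δ → 0⁺` of `gauss_shift`. At height `1 / 2` the factor `exp (-π x)` makes the
integral absolutely convergent, uniformly in `δ`. The left side is the integral of
`exp (iπ z²) cos (2π t z)` along the path from `0` up to `i / 2` and then off to `i / 2 + ∞`, so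
the conditionally convergent Fresnel integral on the real line never appears. -/
theorem fresnel_shift (t : ℝ) :
    IntegrableOn (fun x : ℝ => gaussCos (-I) t (x + (1 / 2 : ℝ) * I)) (Ioi 0) ∧
    (∫ x in Ioi (0 : ℝ), gaussCos (-I) t (x + (1 / 2 : ℝ) * I))
      + I * (∫ y in (0 : ℝ)..(1 / 2), gaussCos (-I) t (y * I))
      = 1 / 2 * (cexp (π / 4 * I) * cexp (-(π * t ^ 2) * I)) := by
  have hpi := Real.pi_pos
  set B : ℝ → ℝ := fun x => Real.exp (π / 4) * Real.cosh (π * t) * Real.exp (-π * x) with hB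
  have hBi : IntegrableOn B (Ioi 0) := (exp_neg_integrableOn_Ioi 0 hpi).const_mul _
  have hbound : ∀ δ : ℝ, 0 ≤ δ → δ ≤ 1 → ∀ x : ℝ,
      ‖gaussCos (δ - I) t (x + (1 / 2 : ℝ) * I)‖ ≤ B x := by
    intro δ h0 h1 x
    refine (norm_gaussCos_le δ t _).trans ?_
    rw [hB]
    simp only
    rw [mul_right_comm (Real.exp (π / 4)), ← Real.exp_add]
    simp only [add_re, ofReal_re, mul_re, I_re, mul_zero, ofReal_im, I_im, mul_one, sub_self,
      add_zero, add_im, mul_im, zero_add]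
    gcongr ?_ * ?_
    · apply Real.exp_le_exp.2
      have : 0 ≤ π * δ * x ^ 2 := by positivity
      have : π * δ ≤ π * 1 := by gcongr
      nlinarith
    · apply le_of_eq; congr 1; ring
  have hmeas : ∀ δ : ℝ, Continuous (fun x : ℝ => gaussCos (δ - I) t (x + (1 / 2 : ℝ) * I)) := by
    intro δ; unfold gaussCos; fun_prop
  have hm0 := hmeas 0
  have hb0 := hbound 0 le_rfl zero_le_one
  simp only [ofReal_zero, zero_sub] at hm0 hb0
  refine ⟨hBi.mono' hm0.aestronglyMeasurable (Eventually.of_forall hb0), ?_⟩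
  have T1 : Tendsto (fun δ : ℝ => ∫ x in Ioi (0 : ℝ), gaussCos (δ - I) t (x + (1 / 2 : ℝ) * I))
      (𝓝[>] 0) (𝓝 (∫ x in Ioi (0 : ℝ), gaussCos (-I) t (x + (1 / 2 : ℝ) * I))) := by
    refine tendsto_integral_filter_of_dominated_convergence B
      (Eventually.of_forall fun δ => (hmeas δ).aestronglyMeasurable) ?_ hBi ?_
    · filter_upwards [Ioc_mem_nhdsGT (zero_lt_one (α := ℝ))] with δ hδ
      exact Eventually.of_forall (hbound δ hδ.1.le hδ.2)
    · refine Eventually.of_forall fun x => ?_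
      have : Continuous (fun δ : ℝ => gaussCos (δ - I) t (x + (1 / 2 : ℝ) * I)) := by
        unfold gaussCos; fun_prop
      have h := (this.tendsto 0).mono_left (nhdsWithin_le_nhds (s := Ioi 0))
      simpa using h
  have T2 : Tendsto (fun δ : ℝ => ∫ y in (0 : ℝ)..(1 / 2), gaussCos (δ - I) t (y * I))
      (𝓝[>] 0) (𝓝 (∫ y in (0 : ℝ)..(1 / 2), gaussCos (-I) t (y * I))) := by
    have : Continuous (fun δ : ℝ => ∫ y in (0 : ℝ)..(1 / 2), gaussCos (δ - I) t (y * I)) := by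
      refine intervalIntegral.continuous_parametric_intervalIntegral_of_continuous ?_ continuous_const
      unfold gaussCos Function.uncurry; fun_prop
    have h := (this.tendsto 0).mono_left (nhdsWithin_le_nhds (s := Ioi 0))
    simpa using h
  have hI : (1 / (-I) : ℂ) = I := by rw [one_div, inv_neg, inv_I, neg_neg]
  have T3 : Tendsto (fun δ : ℝ => 1 / 2 * ((1 / (δ - I : ℂ)) ^ (1 / 2 : ℂ)
      * cexp (-π * t ^ 2 / (δ - I)))) (𝓝[>] 0)
      (𝓝 (1 / 2 * (cexp (π / 4 * I) * cexp (-(π * t ^ 2) * I)))) := by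
    have hne : ((0 : ℝ) - I : ℂ) ≠ 0 := by simp
    have c0 : ContinuousAt (fun δ : ℝ => (δ - I : ℂ)) 0 := by fun_prop
    have c1 : ContinuousAt (fun δ : ℝ => (1 / (δ - I : ℂ))) 0 := continuousAt_const.div c0 hne
    have c2 : ContinuousAt (fun δ : ℝ => (1 / (δ - I : ℂ)) ^ (1 / 2 : ℂ)) 0 := by
      refine c1.cpow continuousAt_const ?_
      simp [hI, slitPlane]
    have c3 : ContinuousAt (fun δ : ℝ => cexp (-π * t ^ 2 / (δ - I))) 0 :=
      (continuousAt_const.div c0 hne).cexp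
    have h := ((c2.mul c3).const_mul (1 / 2 : ℂ)).tendsto.mono_left
      (nhdsWithin_le_nhds (s := Ioi 0))
    have e1 : (I : ℂ) ^ (1 / 2 : ℂ) = cexp (π / 4 * I) := by
      rw [cpow_def_of_ne_zero I_ne_zero, log_I]
      congr 1; ring
    have e2 : (-π * t ^ 2 / (-I) : ℂ) = -(π * t ^ 2) * I := by
      rw [div_eq_mul_one_div, hI]; ring
    have hv : 1 / 2 * (cexp (π / 4 * I) * cexp (-(π * t ^ 2) * I))
        = 1 / 2 * ((1 / ((0 : ℝ) - I : ℂ)) ^ (1 / 2 : ℂ) * cexp (-π * t ^ 2 / ((0 : ℝ) - I))) := by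
      rw [ofReal_zero, zero_sub, e2, hI, e1]
    rw [hv]
    exact h
  have T := (T3.sub T1).sub (T2.const_mul I)
  have hz : Tendsto (fun _ : ℝ => (0 : ℂ)) (𝓝[>] (0 : ℝ)) (𝓝 0) := tendsto_const_nhds
  have := tendsto_nhds_unique (T.congr' ?_) hz
  · linear_combination -this
  · filter_upwards [self_mem_nhdsWithin] with δ hδ
    rw [gauss_shift hδ t]; ring

/-! ### The Mordell integrand in the strip -/

/-- The numerator `exp (iπ z²) cosh (π t (1 + 2iz)) - exp (-iπ / 4)`. The constant subtracted is
the value of the first term at `i / 2`, the only zero of `cosh (π z)` with `0 ≤ Im z ≤ 1`. -/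
noncomputable def mordellNum (t : ℝ) (z : ℂ) : ℂ :=
  Complex.exp (π * z ^ 2 * Complex.I) * Complex.cosh (π * t * (1 + 2 * z * Complex.I))
    - Complex.exp (-(π / 4) * Complex.I)

/-- The function `mordellNum t z / cosh (π z)` with its singularity at `i / 2` removed: since
numerator and denominator both vanish there, the quotient of their divided differences `dslope`
extends the plain quotient holomorphically to the closed strip `0 ≤ Im z ≤ 1`. -/
noncomputable def mordellQuot (t : ℝ) (z : ℂ) : ℂ :=
  dslope (mordellNum t) (Complex.I / 2) z
    / dslope (fun z : ℂ => Complex.cosh (π * z)) (Complex.I / 2) z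

open Complex in
theorem cosh_half : Complex.cosh (π * (I / 2)) = 0 := by
  rw [show (π * (I / 2) : ℂ) = (π / 2 : ℂ) * I by ring, Complex.cosh_mul_I, Complex.cos_pi_div_two]

open Complex in
theorem mordellNum_half (t : ℝ) : mordellNum t (I / 2) = 0 := by
  have h1 : (π * (I / 2) ^ 2 * I : ℂ) = -(π / 4) * I := by rw [div_pow, I_sq]; ring
  have h2 : (1 + 2 * (I / 2) * I : ℂ) = 0 := by linear_combination I_mul_I
  rw [mordellNum, h1, h2]; simp

open Complex in
theorem mordellQuot_eq (t : ℝ) {z : ℂ} (hz : z ≠ I / 2) :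
    mordellQuot t z = mordellNum t z / Complex.cosh (π * z) := by
  rw [mordellQuot, dslope_of_ne _ hz, dslope_of_ne _ hz, slope_def_field, slope_def_field,
    mordellNum_half, cosh_half, sub_zero, sub_zero, div_div_div_cancel_right₀ (sub_ne_zero.2 hz)]

open Complex in
theorem cosh_ne_zero_strip {z : ℂ} (h0 : 0 ≤ z.im) (h1 : z.im ≤ 1) (hz : z ≠ I / 2) :
    Complex.cosh (π * z) ≠ 0 := by
  intro h
  have hpi := Real.pi_pos
  rw [← Complex.cos_mul_I, Complex.cos_eq_zero_iff] at h
  obtain ⟨k, hk⟩ := h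
  have hp : (π : ℂ) ≠ 0 := by exact_mod_cast hpi.ne'
  have hz' : z = -((2 * k + 1) / 2 : ℝ) * I := by
    have : z * I = (2 * k + 1) / 2 := by
      apply mul_left_cancel₀ hp
      linear_combination hk
    push_cast
    linear_combination (-I) * this + z * I_mul_I
  have him : z.im = -((2 * k + 1) / 2 : ℝ) := by rw [hz']; simp
  have k1 : (k : ℝ) < 0 := by linarith
  have k2 : (-2 : ℝ) < k := by linarith
  have k1' : k < 0 := by exact_mod_cast k1
  have k2' : -2 < k := by exact_mod_cast k2
  have hk1 : k = -1 := by omega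
  apply hz
  rw [hz', hk1]; push_cast; ring

open Complex in
theorem differentiable_dslope_of {f : ℂ → ℂ} (hf : Differentiable ℂ f) (c : ℂ) :
    Differentiable ℂ (dslope f c) := by
  rw [← differentiableOn_univ] at hf ⊢
  exact (Complex.differentiableOn_dslope Filter.univ_mem).2 hf

open Complex in
theorem mordellQuot_differentiableAt (t : ℝ) {z : ℂ} (h0 : 0 ≤ z.im) (h1 : z.im ≤ 1) :
    DifferentiableAt ℂ (mordellQuot t) z := by
  have hN : Differentiable ℂ (mordellNum t) := by unfold mordellNum; fun_prop
  have hC : Differentiable ℂ (fun z : ℂ => Complex.cosh (π * z)) := by fun_prop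
  refine ((differentiable_dslope_of hN _) z).div ((differentiable_dslope_of hC _) z) ?_
  by_cases hz : z = I / 2
  · subst hz
    have hd : HasDerivAt (fun z : ℂ => Complex.cosh (π * z))
        (Complex.sinh (π * (I / 2)) * π) (I / 2) := by
      have : HasDerivAt (fun z : ℂ => (π * z : ℂ)) π (I / 2) := by
        simpa using (hasDerivAt_id (I / 2 : ℂ)).const_mul (π : ℂ)
      exact this.ccosh
    rw [dslope_same, hd.deriv, show (π * (I / 2) : ℂ) = (π / 2 : ℂ) * I by ring,
      Complex.sinh_mul_I, Complex.sin_pi_div_two, one_mul]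
    exact mul_ne_zero I_ne_zero (by exact_mod_cast Real.pi_ne_zero)
  · rw [dslope_of_ne _ hz, slope_def_field, cosh_half, sub_zero]
    exact div_ne_zero (cosh_ne_zero_strip h0 h1 hz) (sub_ne_zero.2 hz)

open Complex in
theorem norm_mordellQuot_le (t : ℝ) {z : ℂ} (hr : 1 ≤ z.re) (h0 : 0 ≤ z.im) (h1 : z.im ≤ 1) :
    ‖mordellQuot t z‖ ≤ (4 * (Real.cosh (π * t) + 1)) * Real.exp (-π * z.re) := by
  have hpi := Real.pi_gt_three
  have hz : z ≠ I / 2 := by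
    rintro rfl
    have : (I / 2 : ℂ).re = 0 := by simp
    rw [this] at hr; linarith
  rw [mordellQuot_eq t hz, norm_div]
  have hN : ‖mordellNum t z‖ ≤ Real.cosh (π * t) + 1 := by
    refine (norm_sub_le _ _).trans ?_
    have e1 : ‖cexp (-(π / 4) * I)‖ = 1 := by
      have := Complex.norm_exp_ofReal_mul_I (-(π / 4))
      push_cast at this; exact this
    rw [e1, norm_mul, Complex.norm_exp]
    gcongr
    have r1 : (π * z ^ 2 * I : ℂ).re = -(2 * π * z.re * z.im) := by
      simp [pow_two]; ring
    have r2 : (π * t * (1 + 2 * z * I) : ℂ).re = π * t * (1 - 2 * z.im) := by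
      rw [← ofReal_mul, re_ofReal_mul]
      congr 1
      simp; ring
    have b1 : Real.exp (π * z ^ 2 * I : ℂ).re ≤ 1 := by
      rw [r1, Real.exp_le_one_iff]
      have : 0 ≤ 2 * π * z.re * z.im := by positivity
      linarith
    have b2 : ‖Complex.cosh (π * t * (1 + 2 * z * I))‖ ≤ Real.cosh (π * t) := by
      refine (norm_ccosh_le _).trans ?_
      rw [r2]
      apply Real.cosh_le_cosh.2
      rw [abs_mul]
      apply mul_le_of_le_one_right (abs_nonneg _)
      rw [abs_le]; constructor <;> linarith
    calc _ ≤ 1 * Real.cosh (π * t) := by gcongr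
      _ = _ := one_mul _
  have hC : Real.exp (π * z.re) / 4 ≤ ‖Complex.cosh (π * z)‖ := by
    refine le_trans ?_ (sinh_le_norm_ccosh _)
    have r3 : (π * z : ℂ).re = π * z.re := by simp
    rw [r3, Real.sinh_eq]
    have p1 : 2 ≤ Real.exp (π * z.re) := by
      have := Real.add_one_le_exp (π * z.re)
      nlinarith
    have p2 : Real.exp (-(π * z.re)) ≤ 1 := by
      rw [Real.exp_le_one_iff]; nlinarith
    linarith
  have hpos : 0 < Real.exp (π * z.re) := Real.exp_pos _
  calc _ ≤ (Real.cosh (π * t) + 1) / (Real.exp (π * z.re) / 4) := by gcongr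
    _ = _ := by rw [neg_mul, Real.exp_neg]; field_simp

open Complex in
theorem cosh_ofReal_ne (x : ℝ) : Complex.cosh (π * x) ≠ 0 := by
  rw [← ofReal_mul, ← ofReal_cosh]; exact_mod_cast (Real.cosh_pos _).ne'

open Complex in
theorem cosh_shift (x : ℝ) : Complex.cosh (π * (x + I)) = -Complex.cosh (π * x) := by
  rw [mul_add, Complex.cosh_add, Complex.cosh_mul_I, Complex.sinh_mul_I]; simp

open Complex in
/-- The shift relation of the Mordell integrand. As `cosh (π (x + i)) = -cosh (π x)` and
`exp (-2π x) = 2 cosh (π x) exp (-π x) - 1`, the difference of `mordellQuot` across the strip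
reproduces the original integrand up to a Fresnel kernel at height `1 / 2` and a multiple of
`1 / cosh (π x)`. -/
theorem pointwise_id (t x : ℝ) :
    2 * Complex.cosh (π * t) *
      (cexp (π * x ^ 2 * I) * Complex.cos (2 * π * t * x) / Complex.cosh (π * x))
    = mordellQuot t x - mordellQuot t (x + (1 : ℝ) * I)
      + 2 * cexp (π / 4 * I) * gaussCos (-I) t (x + (1 / 2 : ℝ) * I)
      + 2 * cexp (-(π / 4) * I) * (1 / Real.cosh (π * x) : ℝ) := by
  have hx1 : (x : ℂ) ≠ I / 2 := by
    intro h
    have := congrArg Complex.im h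
    simp at this
  have hx2 : (x + (1 : ℝ) * I : ℂ) ≠ I / 2 := by
    intro h
    have := congrArg Complex.im h
    norm_num at this
  have hc := cosh_ofReal_ne x
  rw [mordellQuot_eq t hx1, mordellQuot_eq t hx2, ofReal_one, one_mul, cosh_shift, mordellNum,
    mordellNum, gaussCos]
  push_cast
  have a1 : cexp (π * (x + I) ^ 2 * I) = -(cexp (π * x ^ 2 * I) * cexp (-(2 * (π * x)))) := by
    have : (π * (x + I) ^ 2 * I : ℂ) = π * x ^ 2 * I + -(2 * (π * x)) - π * I := by
      linear_combination (π * (2 * x + I)) * I_mul_I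
    rw [this, Complex.exp_sub, Complex.exp_add, Complex.exp_pi_mul_I]; ring
  have a2 : cexp (-π * -I * (x + 1 / 2 * I) ^ 2) * cexp (π / 4 * I)
      = cexp (π * x ^ 2 * I) * cexp (-(π * x)) := by
    rw [← Complex.exp_add, ← Complex.exp_add]
    congr 1
    linear_combination (π * (x + I / 4)) * I_mul_I
  have a3 : Complex.cos (2 * π * t * (x + 1 / 2 * I))
      = Complex.cosh (π * t * (1 + 2 * (x + I) * I)) := by
    rw [← Complex.cosh_mul_I]
    have : (π * t * (1 + 2 * (x + I) * I) : ℂ) = 2 * π * t * (x + 1 / 2 * I) * I := by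
      linear_combination (π * t) * I_mul_I
    rw [this]
  have a4 : Complex.cosh (π * t * (1 + 2 * x * I)) + Complex.cosh (π * t * (1 + 2 * (x + I) * I))
      = 2 * Complex.cosh (π * t) * Complex.cos (2 * π * t * x) := by
    have e1 : (π * t * (1 + 2 * x * I) : ℂ) = π * t + 2 * π * t * x * I := by ring
    have e2 : (π * t * (1 + 2 * (x + I) * I) : ℂ) = -(π * t - 2 * π * t * x * I) := by
      linear_combination (2 * π * t) * I_mul_I
    rw [e1, e2, Complex.cosh_neg, Complex.cosh_add, Complex.cosh_sub, Complex.cosh_mul_I]; ring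
  have a5 : cexp (-(2 * (π * x))) = 2 * Complex.cosh (π * x) * cexp (-(π * x)) - 1 := by
    have h1 : cexp (-(2 * (π * x))) = cexp (-(π * x)) * cexp (-(π * x)) := by
      rw [← Complex.exp_add]; congr 1; ring
    have h2 : cexp (π * x) * cexp (-(π * x)) = 1 := by
      rw [← Complex.exp_add]; simp
    rw [h1, Complex.cosh]
    linear_combination -h2
  rw [a1, a3, a5]
  generalize cexp (-π * -I * (x + 1 / 2 * I) ^ 2) = g at a2 ⊢
  generalize cexp (π * x ^ 2 * I) = A at a2 ⊢
  generalize cexp (π / 4 * I) = B at a2 ⊢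
  generalize cexp (-(π / 4) * I) = B'
  generalize Complex.cosh (π * t * (1 + 2 * x * I)) = p at a4 ⊢
  generalize Complex.cosh (π * t * (1 + 2 * (x + I) * I)) = q at a4 ⊢
  generalize Complex.cosh (π * x) = c at hc ⊢
  generalize Complex.cosh (π * t) = d at a4 ⊢
  generalize Complex.cos (2 * π * t * x) = e at a4 ⊢
  field_simp
  linear_combination (-A) * a4 + (-2 * c * q) * a2

open Complex in
/-- On the edge `Re z = 0` the reflection `y ↦ 1 - y` changes the sign of `cosh (iπ y) = cos (π y)`,
so the symmetrized `mordellQuot` has no denominator and equals a Fresnel kernel. -/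
theorem vertical_id (t : ℝ) {s : ℝ} (h0 : 0 < s) (h1 : s ≤ 1 / 2) :
    mordellQuot t ((1 / 2 - s : ℝ) * I) + mordellQuot t ((1 / 2 + s : ℝ) * I)
      = 2 * cexp (π / 4 * I) * gaussCos (-I) t (s * I) := by
  have hn : ∀ y : ℝ, y ≠ 1 / 2 → (y * I : ℂ) ≠ I / 2 := by
    intro y hy h
    apply hy
    have := congrArg Complex.im h
    simpa using this
  have e1 := mordellQuot_eq t (hn (1 / 2 - s) (by linarith))
  have e2 := mordellQuot_eq t (hn (1 / 2 + s) (by linarith))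
  have hne := cosh_ne_zero_strip (z := (1 / 2 - s : ℝ) * I) (by simp; linarith) (by simp; linarith)
    (hn (1 / 2 - s) (by linarith))
  have c1 : Complex.cosh (π * ((1 / 2 - s : ℝ) * I)) = Complex.sin (π * s) := by
    rw [← mul_assoc, Complex.cosh_mul_I, ← Complex.cos_pi_div_two_sub]
    congr 1; push_cast; ring
  have c2 : Complex.cosh (π * ((1 / 2 + s : ℝ) * I)) = -Complex.sin (π * s) := by
    rw [← mul_assoc, Complex.cosh_mul_I, ← Complex.cos_add_pi_div_two]
    congr 1; push_cast; ring
  rw [c1] at hne e1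
  rw [c2] at e2
  rw [e1, e2, mordellNum, mordellNum, gaussCos]
  have d1 : Complex.cosh (π * t * (1 + 2 * ((1 / 2 - s : ℝ) * I) * I))
      = Complex.cos (2 * π * t * (s * I)) := by
    rw [← mul_assoc _ (s : ℂ) I, Complex.cos_mul_I]
    congr 1; push_cast
    linear_combination (π * t * (1 - 2 * s)) * I_mul_I
  have d2 : Complex.cosh (π * t * (1 + 2 * ((1 / 2 + s : ℝ) * I) * I))
      = Complex.cos (2 * π * t * (s * I)) := by
    rw [← mul_assoc _ (s : ℂ) I, Complex.cos_mul_I, ← Complex.cosh_neg]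
    congr 1; push_cast
    linear_combination (-(π * t * (1 + 2 * s))) * I_mul_I
  have d3 : cexp (π * ((1 / 2 - s : ℝ) * I) ^ 2 * I) - cexp (π * ((1 / 2 + s : ℝ) * I) ^ 2 * I)
      = 2 * Complex.sin (π * s) * cexp (π / 4 * I) * cexp (-π * -I * (s * I) ^ 2) := by
    have f1 : (π * ((1 / 2 - s : ℝ) * I) ^ 2 * I : ℂ)
        = π / 4 * I + -π * -I * (s * I) ^ 2 + π * s * I + -(π / 2 * I) := by
      push_cast
      linear_combination (π * I * (1 / 4 - s)) * I_mul_I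
    have f2 : (π * ((1 / 2 + s : ℝ) * I) ^ 2 * I : ℂ)
        = π / 4 * I + -π * -I * (s * I) ^ 2 + -(π * s) * I + -(π / 2 * I) := by
      push_cast
      linear_combination (π * I * (1 / 4 + s)) * I_mul_I
    have f3 : cexp (-(π / 2 * I)) = -I := by
      rw [Complex.exp_neg, Complex.exp_pi_div_two_mul_I, inv_I]
    rw [f1, f2, Complex.exp_add, Complex.exp_add, Complex.exp_add, f3, Complex.exp_add,
      Complex.exp_add, f3, Complex.sin, Complex.exp_add]
    ring
  rw [d1, d2]
  generalize Complex.cos (2 * π * t * (s * I)) = c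
  generalize cexp (π * ((1 / 2 - s : ℝ) * I) ^ 2 * I) = p at d3 ⊢
  generalize cexp (π * ((1 / 2 + s : ℝ) * I) ^ 2 * I) = q at d3 ⊢
  generalize cexp (-π * -I * (s * I) ^ 2) = g at d3 ⊢
  generalize cexp (π / 4 * I) = B at d3 ⊢
  generalize cexp (-(π / 4) * I) = B'
  generalize Complex.sin (π * s) = d at hne d3 ⊢
  field_simp
  linear_combination c * d3

open Complex in
theorem vertical_integral (t : ℝ) :
    ∫ y in (0 : ℝ)..1, mordellQuot t (y * I)
      = 2 * cexp (π / 4 * I) * ∫ s in (0 : ℝ)..(1 / 2), gaussCos (-I) t (s * I) := by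
  have hcont : ContinuousOn (fun y : ℝ => mordellQuot t (y * I)) (Icc 0 1) := by
    intro y hy
    have h1 : ContinuousAt (mordellQuot t) (y * I) :=
      (mordellQuot_differentiableAt t (by simpa using hy.1) (by simpa using hy.2)).continuousAt
    exact (ContinuousAt.comp (f := fun y : ℝ => (y * I : ℂ)) h1 (by fun_prop)).continuousWithinAt
  have i1 : IntervalIntegrable (fun y : ℝ => mordellQuot t (y * I)) volume 0 (1 / 2) := by
    refine (hcont.mono ?_).intervalIntegrable
    rw [uIcc_of_le (by norm_num)]; exact Icc_subset_Icc le_rfl (by norm_num)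
  have i2 : IntervalIntegrable (fun y : ℝ => mordellQuot t (y * I)) volume (1 / 2) 1 := by
    refine (hcont.mono ?_).intervalIntegrable
    rw [uIcc_of_le (by norm_num)]; exact Icc_subset_Icc (by norm_num) le_rfl
  have r1 := intervalIntegral.integral_comp_sub_left (a := 0) (b := 1 / 2)
    (fun y : ℝ => mordellQuot t (y * I)) (1 / 2)
  have r2 := intervalIntegral.integral_comp_add_left (a := 0) (b := 1 / 2)
    (fun y : ℝ => mordellQuot t (y * I)) (1 / 2)
  have j1 := i1.comp_sub_left (1 / 2)
  have j2 := i2.comp_add_left (1 / 2)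
  norm_num at r1 r2 j1 j2
  rw [← intervalIntegral.integral_add_adjacent_intervals i1 i2]
  norm_num
  rw [← r1, ← r2, ← intervalIntegral.integral_add j1.symm j2, ← intervalIntegral.integral_const_mul]
  refine intervalIntegral.integral_congr_ae (Filter.Eventually.of_forall fun s hs => ?_)
  rw [uIoc_of_le (by norm_num)] at hs
  have := vertical_id t hs.1 hs.2
  push_cast at this ⊢
  exact this

/-! ### Evaluation -/

open Complex in
/-- The Mordell integral `∫₀^∞ exp (iπ x²) cos (2π t x) / cosh (π x) dx`, together with its
absolute convergence. The Fresnel pieces of `pointwise_id` and `vertical_integral` are the two legs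
of the path in `fresnel_shift`. -/
theorem mordell_eval (t : ℝ) :
    IntegrableOn (fun x : ℝ => cexp (π * x ^ 2 * I) * Complex.cos (2 * π * t * x)
      / Complex.cosh (π * x)) (Ioi 0) ∧
    2 * Complex.cosh (π * t) * (∫ x in Ioi (0 : ℝ),
      cexp (π * x ^ 2 * I) * Complex.cos (2 * π * t * x) / Complex.cosh (π * x))
      = I * cexp (-(π * t ^ 2) * I) + cexp (-(π / 4) * I) := by
  obtain ⟨h1, h2, h3⟩ := strip_shift (f := mordellQuot t) zero_le_one Real.pi_pos
    (fun z h0 h1 => mordellQuot_differentiableAt t h0 h1)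
    (fun z hr h0 h1 => norm_mordellQuot_le t hr h0 h1)
  obtain ⟨g1, g2⟩ := fresnel_shift t
  obtain ⟨s1, s2⟩ := integral_inv_cosh
  have s1c : IntegrableOn (fun x : ℝ => ((1 / Real.cosh (π * x) : ℝ) : ℂ)) (Ioi 0) := s1.ofReal
  have s2c : ∫ x in Ioi (0 : ℝ), ((1 / Real.cosh (π * x) : ℝ) : ℂ) = 1 / 2 := by
    rw [integral_complex_ofReal, s2]; norm_num
  have g1' := g1.const_mul (2 * cexp (π / 4 * I))
  have s1' := s1c.const_mul (2 * cexp (-(π / 4) * I))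
  have hne : 2 * Complex.cosh (π * t) ≠ 0 := mul_ne_zero two_ne_zero (cosh_ofReal_ne t)
  have q1 : Integrable (fun x : ℝ => mordellQuot t x - mordellQuot t (x + (1 : ℝ) * I))
      (volume.restrict (Ioi 0)) := h1.sub h2
  have q2 : Integrable (fun x : ℝ => mordellQuot t x - mordellQuot t (x + (1 : ℝ) * I)
      + 2 * cexp (π / 4 * I) * gaussCos (-I) t (x + (1 / 2 : ℝ) * I))
      (volume.restrict (Ioi 0)) := q1.add g1'
  constructor
  · refine ((q2.add s1').const_mul (2 * Complex.cosh (π * t))⁻¹).congr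
      (Filter.Eventually.of_forall fun x => ?_)
    have := pointwise_id t x
    simp only [Pi.add_apply]
    rw [← this, inv_mul_cancel_left₀ hne]
  · rw [← integral_const_mul]
    simp_rw [pointwise_id]
    rw [integral_add q2 s1', integral_add q1 g1', integral_sub h1 h2, h3,
      integral_const_mul, integral_const_mul, s2c, vertical_integral]
    have hsq : cexp (π / 4 * I) * cexp (π / 4 * I) = I := by
      rw [← Complex.exp_add, show (π / 4 * I + π / 4 * I : ℂ) = π / 2 * I by ring,
        Complex.exp_pi_div_two_mul_I]
    linear_combination (2 * cexp (π / 4 * I)) * g2 + cexp (-(π * t ^ 2) * I) * hsq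

theorem stmt_11 (t : ℝ) :
    ∫ x in Set.Ioi (0:ℝ), Real.cos (2 * π * t * x) * Real.sin (π * x ^ 2) / Real.cosh (π * x)
      = (-1 + Real.sqrt 2 * Real.cos (π * t ^ 2)) / (2 * Real.sqrt 2 * Real.cosh (π * t)) := by
  obtain ⟨hi, he⟩ := mordell_eval t
  have him := integral_im hi
  -- The integrand is the imaginary part of the Mordell integrand.
  have hpt : ∀ x : ℝ, RCLike.im (Complex.exp (π * x ^ 2 * Complex.I) * Complex.cos (2 * π * t * x)
      / Complex.cosh (π * x))
      = Real.cos (2 * π * t * x) * Real.sin (π * x ^ 2) / Real.cosh (π * x) := by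
    intro x
    have : Complex.exp (π * x ^ 2 * Complex.I) * Complex.cos (2 * π * t * x) / Complex.cosh (π * x)
        = Complex.exp ((π * x ^ 2 : ℝ) * Complex.I)
          * ((Real.cos (2 * π * t * x) / Real.cosh (π * x) : ℝ) : ℂ) := by
      push_cast; ring
    rw [this, RCLike.im_eq_complex_im, Complex.im_mul_ofReal, Complex.exp_ofReal_mul_I_im]
    ring
  simp_rw [hpt] at him
  rw [him]
  have he2 := congrArg Complex.im he
  have e0 : (2 * Complex.cosh (π * t) : ℂ) = ((2 * Real.cosh (π * t) : ℝ) : ℂ) := by push_cast; ring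
  have e1 : (-(π * t ^ 2) * Complex.I : ℂ) = ((-(π * t ^ 2) : ℝ) : ℂ) * Complex.I := by push_cast; ring
  have e2 : (-(π / 4) * Complex.I : ℂ) = ((-(π / 4) : ℝ) : ℂ) * Complex.I := by push_cast; ring
  rw [e0, e1, e2, Complex.im_ofReal_mul, Complex.add_im, Complex.I_mul_im,
    Complex.exp_ofReal_mul_I_im, Complex.exp_ofReal_mul_I_re, Real.cos_neg, Real.sin_neg,
    Real.sin_pi_div_four] at he2
  rw [RCLike.im_eq_complex_im]
  have hc := Real.cosh_pos (π * t)
  have h2 : 0 < Real.sqrt 2 := by positivity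
  have hs : Real.sqrt 2 * Real.sqrt 2 = 2 := Real.mul_self_sqrt (by norm_num)
  rw [eq_div_iff (by positivity)]
  linear_combination Real.sqrt 2 * he2 - 1 / 2 * hs
end

section
/- For every real number x > 0, x / sinh x equals 2 · ∑_{k=0}^∞ x · e^{−x(2k+1)}, and consequently ∫₀^∞ x/sinh x dx = 2 · ∑_{k=0}^∞ ∫₀^∞ x e^{−x(2k+1)} dx = 2 · ∑_{k=0}^∞ 1/(2k+1)². -/
open Real MeasureTheory Set

/-!
Writing `1 / sinh x = 2 * exp (-x) / (1 - exp (-2 * x))` and expanding the geometric series in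
`exp (-2 * x) < 1` gives the pointwise identity (`hasSum_div_sinh`). Each term has
integral `Γ(2) / (2 * k + 1) ^ 2` over the half-line (`integral_term`). The terms are nonnegative
and these integrals are summable, so sum and integral may be interchanged.
-/

/-- The geometric series in `exp (-2 * x)`, multiplied by `x * exp (-x)`. -/
lemma hasSum_div_sinh {x : ℝ} (hx : 0 < x) :
    HasSum (fun k : ℕ => x * Real.exp (-x * (2 * (k : ℝ) + 1))) (x / Real.sinh x / 2) := by
  have hlt : Real.exp (-2 * x) < 1 := Real.exp_lt_one_iff.2 (by linarith)
  have h := (hasSum_geometric_of_lt_one (Real.exp_pos (-2 * x)).le hlt).mul_left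
    (x * Real.exp (-x))
  convert! h using 1
  · funext k
    rw [← Real.exp_nat_mul, mul_assoc, ← Real.exp_add]
    ring_nf
  · have hs : Real.sinh x ≠ 0 := (Real.sinh_pos_iff.2 hx).ne'
    have h1 : 1 - Real.exp (-2 * x) ≠ 0 := by linarith
    have key : 2 * Real.sinh x * Real.exp (-x) = 1 - Real.exp (-2 * x) := by
      have e1 : Real.exp x * Real.exp (-x) = 1 := by rw [← Real.exp_add]; simp
      have e2 : Real.exp (-x) * Real.exp (-x) = Real.exp (-2 * x) := by
        rw [← Real.exp_add]; ring_nf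
      rw [Real.sinh_eq]
      linear_combination e1 - e2
    rw [← key]
    have := (Real.exp_pos (-x)).ne'
    field_simp

lemma integral_term (k : ℕ) :
    ∫ x in Set.Ioi (0:ℝ), x * Real.exp (-x * (2 * (k : ℝ) + 1)) = 1 / (2 * (k : ℝ) + 1) ^ 2 := by
  have h := Real.integral_rpow_mul_exp_neg_mul_Ioi (a := 2) (r := 2 * (k : ℝ) + 1)
    two_pos (by positivity)
  norm_num [Real.Gamma_two] at h
  rw [one_div, ← h]
  refine integral_congr_ae (Filter.Eventually.of_forall fun x => ?_)
  simp only
  ring_nf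

lemma integrableOn_term (k : ℕ) :
    IntegrableOn (fun x : ℝ => x * Real.exp (-x * (2 * (k : ℝ) + 1))) (Set.Ioi 0) := by
  refine Integrable.of_integral_ne_zero ?_
  rw [integral_term]
  positivity

lemma summable_odd_sq : Summable fun k : ℕ => 1 / (2 * (k : ℝ) + 1) ^ 2 := by
  have h := (Real.summable_one_div_nat_pow (p := 2)).2 one_lt_two
  have h2 := h.comp_injective (i := fun k : ℕ => 2 * k + 1) (fun a b hab => by simpa using hab)
  refine h2.congr fun k => ?_
  simp

theorem stmt_16 :
    (∀ x : ℝ, 0 < x →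
      x / Real.sinh x = 2 * ∑' k : ℕ, x * Real.exp (-x * (2 * (k : ℝ) + 1)))
    ∧ (∫ x in Set.Ioi (0:ℝ), x / Real.sinh x)
        = 2 * ∑' k : ℕ, ∫ x in Set.Ioi (0:ℝ), x * Real.exp (-x * (2 * (k : ℝ) + 1))
    ∧ (∫ x in Set.Ioi (0:ℝ), x / Real.sinh x)
        = 2 * ∑' k : ℕ, 1 / (2 * (k : ℝ) + 1) ^ 2 := by
  have hpt : ∀ x : ℝ, 0 < x →
      x / Real.sinh x = 2 * ∑' k : ℕ, x * Real.exp (-x * (2 * (k : ℝ) + 1)) := by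
    intro x hx
    rw [(hasSum_div_sinh hx).tsum_eq]
    ring
  have hint : (∫ x in Set.Ioi (0:ℝ), x / Real.sinh x)
      = 2 * ∑' k : ℕ, ∫ x in Set.Ioi (0:ℝ), x * Real.exp (-x * (2 * (k : ℝ) + 1)) := by
    rw [setIntegral_congr_fun measurableSet_Ioi fun x hx => hpt x hx, integral_const_mul,
      integral_tsum_of_summable_integral_norm integrableOn_term]
    refine summable_odd_sq.congr fun k => ?_
    rw [← integral_term]
    refine setIntegral_congr_fun measurableSet_Ioi fun x hx => ?_
    have hx' : (0:ℝ) < x := hx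
    exact (Real.norm_of_nonneg (by positivity)).symm
  refine ⟨hpt, hint, ?_⟩
  rw [hint]
  simp only [integral_term]
end
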